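/- arXiv:gr-qc/0401011 — 9 statements merged into one kernel-verified Lean document; each statement's English description precedes it below -/
import Mathlib

section
/- For every z with 0 ≤ z < 1, the limit as y → 0⁺ of X_z(y)²·v(y,z) equals −2/9. -/
/-!
Near `0` the integrand of `X z` is `t² (1 + o(1))`, so `X z y / y³ → 1/3`; this is L'Hôpital's
rule together with the fundamental theorem of calculus (`tendsto_X_div_cube`). On the other hand
`y⁶ v(y, z)` is a polynomial in `y` with value `-2` at `0`, so the product
`(X z y / y³)² · (y⁶ v(y, z))` tends to `(1/3)² · (-2) = -2/9`.
-/

open Real Topology Filter MeasureTheory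

/-- The tortoise coordinate `X z y = ∫_0^y t²/(t² - 2tz + 1) dt`. -/
noncomputable def X (z y : ℝ) : ℝ := ∫ t in (0:ℝ)..y, t ^ 2 / (t ^ 2 - 2 * t * z + 1)

/-- The rescaled potential `v(y,z)`. -/
noncomputable def v (y z : ℝ) : ℝ :=
  2 * z / y ^ 3 - (2 + 4 * z ^ 2) / y ^ 4 + 6 * z / y ^ 5 - 2 / y ^ 6

lemma quadratic_pos {z : ℝ} (hz0 : 0 ≤ z) (hz1 : z < 1) (t : ℝ) :
    0 < t ^ 2 - 2 * t * z + 1 := by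
  nlinarith [sq_nonneg (t - z)]

lemma hasDerivAt_X {z : ℝ} (hz0 : 0 ≤ z) (hz1 : z < 1) (y : ℝ) :
    HasDerivAt (X z) (y ^ 2 / (y ^ 2 - 2 * y * z + 1)) y := by
  have hc : Continuous fun t : ℝ => t ^ 2 / (t ^ 2 - 2 * t * z + 1) :=
    Continuous.div (by fun_prop) (by fun_prop) fun t => (quadratic_pos hz0 hz1 t).ne'
  exact hc.integral_hasStrictDerivAt 0 y |>.hasDerivAt

lemma tendsto_X_div_cube {z : ℝ} (hz0 : 0 ≤ z) (hz1 : z < 1) :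
    Tendsto (fun y : ℝ => X z y / y ^ 3) (𝓝[>] 0) (𝓝 (1 / 3)) := by
  refine HasDerivAt.lhopital_zero_nhdsGT
    (f' := fun y => y ^ 2 / (y ^ 2 - 2 * y * z + 1)) (g' := fun y => 3 * y ^ 2)
    (Eventually.of_forall fun y => hasDerivAt_X hz0 hz1 y)
    (Eventually.of_forall fun y => by simpa using hasDerivAt_pow 3 y) ?_ ?_ ?_ ?_
  · filter_upwards [self_mem_nhdsWithin] with y hy
    have : y ≠ 0 := ne_of_gt hy
    positivity
  · have h := (hasDerivAt_X hz0 hz1 0).continuousAt.tendsto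
    rw [show X z 0 = 0 by simp [X]] at h
    exact h.mono_left nhdsWithin_le_nhds
  · have h : Tendsto (fun y : ℝ => y ^ 3) (𝓝 0) (𝓝 (0 ^ 3)) :=
      (continuous_pow 3).tendsto 0
    rw [zero_pow three_ne_zero] at h
    exact h.mono_left nhdsWithin_le_nhds
  · have hc : Continuous fun y : ℝ => 1 / (3 * (y ^ 2 - 2 * y * z + 1)) :=
      Continuous.div (by fun_prop) (by fun_prop)
        fun y => (mul_pos three_pos (quadratic_pos hz0 hz1 y)).ne'
    have h := (hc.tendsto 0).mono_left (nhdsWithin_le_nhds (s := Set.Ioi 0))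
    norm_num at h
    norm_num
    refine h.congr' ?_
    filter_upwards [self_mem_nhdsWithin] with y hy
    have hy0 : y ≠ 0 := ne_of_gt hy
    have hq := (quadratic_pos hz0 hz1 y).ne'
    field_simp

/-- For every `z` with `0 ≤ z < 1`, `X_z(y)² v(y,z) → -2/9` as `y → 0⁺`. -/
theorem stmt_3 (z : ℝ) (hz0 : 0 ≤ z) (hz1 : z < 1) :
    Tendsto (fun y : ℝ => (X z y) ^ 2 * v y z) (𝓝[>] 0) (𝓝 (-2 / 9)) := by
  have hc : Continuous fun y : ℝ =>
      2 * z * y ^ 3 - (2 + 4 * z ^ 2) * y ^ 2 + 6 * z * y - 2 := by fun_prop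
  have h := ((tendsto_X_div_cube hz0 hz1).pow 2).mul
    ((hc.tendsto 0).mono_left (nhdsWithin_le_nhds (s := Set.Ioi 0)))
  rw [show ((1 : ℝ) / 3) ^ 2 * (2 * z * 0 ^ 3 - (2 + 4 * z ^ 2) * 0 ^ 2 + 6 * z * 0 - 2)
    = -2 / 9 by norm_num] at h
  refine h.congr' ?_
  filter_upwards [self_mem_nhdsWithin] with y hy
  have hy0 : y ≠ 0 := ne_of_gt hy
  unfold v
  field_simp
end

section
/- For every z with 0 ≤ z < 1, the limit as y → ∞ of X_z(y)²·v(y,z) equals 0. -/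
/-! The integrand of `X z` is bounded by `1 / (1 - z²)`, since
`t² - 2tz + 1 = (1 - z²) t² + (tz - 1)²`. Hence `X z y = O(y)`, and it suffices that
`y² v(y, z) → 0`, which holds because `v` is a polynomial in `1 / y` starting in degree `3`. -/

open Real Topology Filter MeasureTheory

lemma abs_X_le (z : ℝ) (hz0 : 0 ≤ z) (hz1 : z < 1) (y : ℝ) :
    |X z y| ≤ 1 / (1 - z ^ 2) * |y| := by
  have hc : 0 < 1 - z ^ 2 := by nlinarith
  have h := intervalIntegral.norm_integral_le_of_norm_le_const (a := 0) (b := y)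
    (f := fun t : ℝ => t ^ 2 / (t ^ 2 - 2 * t * z + 1)) (C := 1 / (1 - z ^ 2)) (by
      intro t _
      have hd : 0 < t ^ 2 - 2 * t * z + 1 := by nlinarith [sq_nonneg (t - z)]
      rw [Real.norm_of_nonneg (by positivity), div_le_div_iff₀ hd hc]
      nlinarith [sq_nonneg (t * z - 1)])
  simpa [X, Real.norm_eq_abs] using h

lemma tendsto_sq_mul_v (z : ℝ) : Tendsto (fun y : ℝ => y ^ 2 * v y z) atTop (𝓝 0) := by
  have hcont : Continuous fun u : ℝ =>
      2 * z * u - (2 + 4 * z ^ 2) * u ^ 2 + 6 * z * u ^ 3 - 2 * u ^ 4 := by fun_prop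
  have h := (hcont.tendsto 0).comp (tendsto_inv_atTop_zero (𝕜 := ℝ))
  simp only [mul_zero, ne_eq, OfNat.ofNat_ne_zero, not_false_eq_true, zero_pow, sub_zero,
    add_zero] at h
  refine h.congr' ?_
  filter_upwards [eventually_gt_atTop 0] with y hy
  simp only [Function.comp, v]
  field_simp

/-- For every `z` with `0 ≤ z < 1`, `X_z(y)² v(y,z) → 0` as `y → ∞`. -/
theorem stmt_4 (z : ℝ) (hz0 : 0 ≤ z) (hz1 : z < 1) :
    Tendsto (fun y : ℝ => (X z y) ^ 2 * v y z) atTop (𝓝 0) := by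
  have h := ((tendsto_sq_mul_v z).abs).const_mul ((1 / (1 - z ^ 2)) ^ 2)
  rw [abs_zero, mul_zero] at h
  refine squeeze_zero_norm (fun y => ?_) h
  have hX : |X z y| ^ 2 ≤ (1 / (1 - z ^ 2) * |y|) ^ 2 :=
    pow_le_pow_left₀ (abs_nonneg _) (abs_X_le z hz0 hz1 y) 2
  calc ‖X z y ^ 2 * v y z‖ = |X z y| ^ 2 * |v y z| := by
        rw [Real.norm_eq_abs, abs_mul, abs_pow]
    _ ≤ (1 / (1 - z ^ 2) * |y|) ^ 2 * |v y z| := by gcongr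
    _ = (1 / (1 - z ^ 2)) ^ 2 * |y ^ 2 * v y z| := by
        rw [abs_mul, abs_pow]; ring
end

section
/- For every z with 0 ≤ z ≤ 1/2, there exist constants c > −1/4 and C < ∞ such that for all y > 0 one has c ≤ X_z(y)²·v(y,z) ≤ C. (That is, the rescaled potential satisfies conditions (i) and (ii): sup_{y>0} X_z(y)²·v(y,z) < ∞ and inf_{y>0} X_z(y)²·v(y,z) > −1/4.) -/
/-!
With `D = y² - 2yz + 1` the potential factors as `v(y,z) = 2 (zy - 1) D / y⁶`, so its sign is that
of `zy - 1`.

* For `zy ≥ 1` (hence `y ≥ 2`) the product `X² v` is nonnegative, and `D ≥ (3/4) y²` gives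
  `X ≤ (4/3) y`, from which `X² v ≤ 4`.
* For `zy < 1` the product is nonpositive, and it is at least `-2/9`. This is equivalent to
  `X(y) ≤ G(y) := y³ / (3 √((1 - zy) D))`. Both sides vanish at `0`, and
  `G' ≥ y² / D = X'` reduces to a polynomial inequality (`poly_ineq`) that holds for `z ≤ 1/2`.

The bound `-2/9 > -1/4` is the limit of `X² v` as `y → 0`.
-/

open Real Topology Filter MeasureTheory

lemma D_lower (z y : ℝ) (hz0 : 0 ≤ z) (hz1 : z ≤ 1 / 2) :
    3 / 4 * y ^ 2 ≤ y ^ 2 - 2 * y * z + 1 := by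
  nlinarith [sq_nonneg (y * z - 1), mul_nonneg (sq_nonneg y) (by nlinarith : 0 ≤ 1 / 4 - z ^ 2)]

lemma D_pos (z y : ℝ) (hz0 : 0 ≤ z) (hz1 : z ≤ 1 / 2) : 0 < y ^ 2 - 2 * y * z + 1 := by
  nlinarith [sq_nonneg (y - z)]

lemma v_eq (y z : ℝ) (hy : 0 < y) :
    v y z = 2 * (z * y - 1) * (y ^ 2 - 2 * y * z + 1) / y ^ 6 := by
  unfold v
  field_simp
  ring

lemma integrand_continuous (z : ℝ) (hz0 : 0 ≤ z) (hz1 : z ≤ 1 / 2) :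
    Continuous fun t : ℝ => t ^ 2 / (t ^ 2 - 2 * t * z + 1) :=
  Continuous.div (by fun_prop) (by fun_prop) fun t => (D_pos z t hz0 hz1).ne'

lemma X_nonneg (z y : ℝ) (hz0 : 0 ≤ z) (hz1 : z ≤ 1 / 2) (hy : 0 ≤ y) : 0 ≤ X z y :=
  intervalIntegral.integral_nonneg hy fun t _ =>
    div_nonneg (sq_nonneg t) (D_pos z t hz0 hz1).le

lemma X_le_linear (z y : ℝ) (hz0 : 0 ≤ z) (hz1 : z ≤ 1 / 2) (hy : 0 ≤ y) :
    X z y ≤ 4 / 3 * y := by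
  have h := intervalIntegral.norm_integral_le_of_norm_le_const (a := 0) (b := y) (C := 4 / 3)
    (f := fun t : ℝ => t ^ 2 / (t ^ 2 - 2 * t * z + 1)) (fun t _ => by
      have hD := D_pos z t hz0 hz1
      rw [Real.norm_of_nonneg (div_nonneg (sq_nonneg t) hD.le), div_le_iff₀ hD]
      linarith [D_lower z t hz0 hz1])
  rw [sub_zero, abs_of_nonneg hy] at h
  exact (le_abs_self _).trans h

lemma X_hasDerivAt (z y : ℝ) (hz0 : 0 ≤ z) (hz1 : z ≤ 1 / 2) :
    HasDerivAt (X z) (y ^ 2 / (y ^ 2 - 2 * y * z + 1)) y :=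
  intervalIntegral.integral_hasDerivAt_right
    ((integrand_continuous z hz0 hz1).intervalIntegrable _ _)
    ((integrand_continuous z hz0 hz1).stronglyMeasurableAtFilter _ _)
    (integrand_continuous z hz0 hz1).continuousAt

/-- The inequality behind `G' ≥ X'`, in the variables `w = zy` and `s = y²`; the condition
`z ≤ 1/2` enters as `4 w² ≤ s`. -/
lemma poly_ineq (w s : ℝ) (hw1 : w < 1) (hs : 4 * w ^ 2 ≤ s) :
    0 ≤ s * (4 - 3 * w) + 6 - 15 * w + 8 * w ^ 2 ∧
    36 * (1 - w) ^ 3 * (s + 1 - 2 * w) ≤ (s * (4 - 3 * w) + 6 - 15 * w + 8 * w ^ 2) ^ 2 := by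
  obtain ⟨r, hr, rfl⟩ : ∃ r, 0 ≤ r ∧ s = 4 * w ^ 2 + r := ⟨s - 4 * w ^ 2, by linarith, by ring⟩
  have hN : 0 ≤ 24 * w ^ 2 - 12 * w ^ 3 + 6 - 15 * w := by
    nlinarith [sq_nonneg (w - 1 / 2), mul_nonneg (sq_nonneg w) (by linarith : 0 ≤ 1 - w)]
  constructor
  · nlinarith [mul_nonneg hr (by linarith : 0 ≤ 4 - 3 * w)]
  · have h0 : 0 ≤ 9 * w ^ 2 * ((4 * w ^ 2 - 6 * w + 1) ^ 2 + 4 * (w - 1) ^ 2) := by positivity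
    have h1 : 0 ≤ 2 - 8 * w + 29 * w ^ 2 - 34 * w ^ 3 + 12 * w ^ 4 := by
      nlinarith [sq_nonneg (1 - 2 * w), sq_nonneg (w * (1 - w)), sq_nonneg (w * (1 - 2 * w)),
        mul_nonneg (sq_nonneg w) (by linarith : 0 ≤ 1 - w), sq_nonneg (w * (3 - 4 * w))]
    -- the difference of the two sides, expanded in powers of `r`
    linear_combination h0 + 6 * mul_nonneg hr h1 + sq_nonneg (r * (4 - 3 * w))

/-- The cubic comparison bound `X ≤ G`, obtained by comparing derivatives. -/
lemma X_le_G (z y : ℝ) (hz0 : 0 ≤ z) (hz1 : z ≤ 1 / 2) (hy : 0 < y) (hzy : z * y < 1) :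
    X z y ≤ y ^ 3 / (3 * √((1 - z * y) * (y ^ 2 - 2 * y * z + 1))) := by
  set P : ℝ → ℝ := fun t => (1 - z * t) * (t ^ 2 - 2 * t * z + 1) with hPdef
  have hw : ∀ t ∈ Set.Icc 0 y, 0 < 1 - z * t := fun t ht => by
    nlinarith [mul_le_mul_of_nonneg_left ht.2 hz0]
  have hP : ∀ t ∈ Set.Icc 0 y, 0 < P t := fun t ht => mul_pos (hw t ht) (D_pos z t hz0 hz1)
  have hP' : ∀ t, HasDerivAt P
      (-z * (t ^ 2 - 2 * t * z + 1) + (1 - z * t) * (2 * t - 2 * z)) t := fun t => by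
    have h1 : HasDerivAt (fun t : ℝ => 1 - z * t) (-z) t := by
      simpa using ((hasDerivAt_id t).const_mul z).const_sub 1
    have h2 : HasDerivAt (fun t : ℝ => t ^ 2 - 2 * t * z + 1) (2 * t - 2 * z) t := by
      have := (((hasDerivAt_id t).pow 2).sub
        (((hasDerivAt_id t).const_mul 2).mul_const z)).add_const 1
      simpa using this
    exact h1.mul h2
  have hG : ∀ t ∈ Set.Icc 0 y, HasDerivAt (fun t => t ^ 3 / (3 * √(P t)) - X z t)
      ((3 * t ^ 2 * (3 * √(P t)) - t ^ 3 * (3 *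
        ((-z * (t ^ 2 - 2 * t * z + 1) + (1 - z * t) * (2 * t - 2 * z)) / (2 * √(P t)))))
        / (3 * √(P t)) ^ 2 - t ^ 2 / (t ^ 2 - 2 * t * z + 1)) t := fun t ht => by
    have h3 : HasDerivAt (fun t : ℝ => t ^ 3) (3 * t ^ 2) t := by simpa using hasDerivAt_pow 3 t
    have hs := Real.sqrt_pos.2 (hP t ht)
    exact (h3.div (((hP' t).sqrt (hP t ht).ne').const_mul 3) (by positivity)).sub
      (X_hasDerivAt z t hz0 hz1)
  have hmono : MonotoneOn (fun t => t ^ 3 / (3 * √(P t)) - X z t) (Set.Icc 0 y) := by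
    apply monotoneOn_of_deriv_nonneg (convex_Icc 0 y)
    · exact fun t ht => (hG t ht).continuousAt.continuousWithinAt
    · exact fun t ht => (hG t (interior_subset ht)).differentiableAt.differentiableWithinAt
    · intro t ht
      have ht' := interior_subset ht
      rw [(hG t ht').deriv, sub_nonneg]
      have hD := D_pos z t hz0 hz1
      have hwt := hw t ht'
      have hsP := Real.sqrt_pos.2 (hP t ht')
      have hsq : √(P t) ^ 2 = (1 - z * t) * (t ^ 2 - 2 * t * z + 1) := Real.sq_sqrt (hP t ht').le
      obtain ⟨hN0, hN⟩ := poly_ineq (z * t) (t ^ 2) (by linarith)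
        (by nlinarith [mul_nonneg (sq_nonneg t) (by nlinarith : 0 ≤ 1 / 4 - z ^ 2)])
      generalize √(P t) = S at *
      -- the numerator `6P - tP'` of `G'` dominates `6(1 - zt)√P`, by comparing squares
      have key : 6 * (1 - z * t) * S ≤
          t ^ 2 * (4 - 3 * (z * t)) + 6 - 15 * (z * t) + 8 * (z * t) ^ 2 := by
        apply le_of_sq_le_sq _ hN0
        rw [mul_pow, hsq]
        linarith
      have e : (3 * t ^ 2 * (3 * S) - t ^ 3 * (3 *
          ((-z * (t ^ 2 - 2 * t * z + 1) + (1 - z * t) * (2 * t - 2 * z)) / (2 * S))))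
          / (3 * S) ^ 2 =
          t ^ 2 * (t ^ 2 * (4 - 3 * (z * t)) + 6 - 15 * (z * t) + 8 * (z * t) ^ 2)
            / (6 * S * S ^ 2) := by
        field_simp
        linear_combination 36 * t ^ 2 * hsq
      rw [e, hsq, div_le_div_iff₀ hD (by positivity)]
      have := mul_le_mul_of_nonneg_left key (mul_nonneg (sq_nonneg t) hD.le)
      linarith
  have := hmono (Set.left_mem_Icc.2 hy.le) (Set.right_mem_Icc.2 hy.le) hy.le
  have hX0 : X z 0 = 0 := by simp [X]
  simp only [hX0] at this
  norm_num at this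
  exact this

/-- Conditions (i) and (ii): for `0 ≤ z ≤ 1/2` the rescaled potential satisfies
`-1/4 < c ≤ X_z(y)² v(y,z) ≤ C` for all `y > 0`. -/
theorem stmt_5 (z : ℝ) (hz0 : 0 ≤ z) (hz1 : z ≤ 1 / 2) :
    ∃ c C : ℝ, -1 / 4 < c ∧
      ∀ y : ℝ, 0 < y → c ≤ (X z y) ^ 2 * v y z ∧ (X z y) ^ 2 * v y z ≤ C := by
  refine ⟨-2 / 9, 4, by norm_num, fun y hy => ?_⟩
  have hD := D_pos z y hz0 hz1
  have hX0 := X_nonneg z y hz0 hz1 hy.le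
  rw [v_eq y z hy, ← mul_div_assoc, le_div_iff₀ (by positivity), div_le_iff₀ (by positivity)]
  rcases lt_or_ge (z * y) 1 with h | h
  · have hP : 0 < (1 - z * y) * (y ^ 2 - 2 * y * z + 1) := mul_pos (by linarith) hD
    have hle := pow_le_pow_left₀ hX0 (X_le_G z y hz0 hz1 hy h) 2
    rw [div_pow, mul_pow, Real.sq_sqrt hP.le, le_div_iff₀ (by positivity)] at hle
    constructor
    · linarith
    · nlinarith [mul_nonneg (sq_nonneg (X z y)) hP.le, pow_pos hy 6]
  · have hy2 : 2 ≤ y := by nlinarith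
    have hQ : 0 ≤ (z * y - 1) * (y ^ 2 - 2 * y * z + 1) := mul_nonneg (by linarith) hD.le
    have hle := pow_le_pow_left₀ hX0 (X_le_linear z y hz0 hz1 hy.le) 2
    constructor
    · nlinarith [mul_nonneg (sq_nonneg (X z y)) hQ, pow_pos hy 6]
    · have hQ2 : (z * y - 1) * (y ^ 2 - 2 * y * z + 1) ≤ y / 2 * y ^ 2 :=
        mul_le_mul (by nlinarith) (by nlinarith) hD.le (by positivity)
      have h1 := mul_le_mul hle hQ2 hQ (by positivity)
      have h2 : 2 * y ^ 5 ≤ y ^ 6 := by nlinarith [pow_pos hy 5]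
      nlinarith [pow_pos hy 5]
end

section
/- Let ρ : (0,∞) → (0,∞) be twice continuously differentiable and let ψ : (0,∞) → ℝ be smooth with compact support contained in (0,∞). Set u(r) = ρ(r)·ψ(r)/r. Then ∫_0^∞ (ψ'(r))²·ρ(r)² dr = ∫_0^∞ [ (u'(r))² + (ρ''(r)/ρ(r))·u(r)² ]·r² dr. -/
open Real Topology Filter MeasureTheory

/-!
On `(0,∞)` the substitution `u = ρψ/r` gives the pointwise identity
`(u'² + (ρ''/ρ) u²) r² = ψ'² ρ² + F'` with `F = (ρ ρ' - ρ²/r) ψ²`.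
Since `ψ` is supported in a compact subset of `(0,∞)`, `F` extends to a compactly supported
`C¹` function on the whole line vanishing at `0`, so its derivative integrates to zero.
-/

/-- A function on the line that is `Cⁿ` on `(0,∞)` becomes globally `Cⁿ` after multiplication by
a `Cⁿ` cutoff supported in `(0,∞)`, whatever its values on `(-∞,0]`. -/
lemma contDiff_mul_of_tsupport_subset_Ioi {n : WithTop ℕ∞} {G φ : ℝ → ℝ}
    (hG : ContDiffOn ℝ n G (Set.Ioi 0)) (hφ : ContDiff ℝ n φ)
    (hsupp : tsupport φ ⊆ Set.Ioi 0) : ContDiff ℝ n (fun r => G r * φ r) := by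
  rw [contDiff_iff_contDiffAt]
  intro x
  by_cases hx : x ∈ tsupport φ
  · exact (hG.contDiffAt (Ioi_mem_nhds (hsupp hx))).mul hφ.contDiffAt
  · have h0 : (fun r => G r * φ r) =ᶠ[𝓝 x] fun _ => 0 := by
      filter_upwards [notMem_tsupport_iff_eventuallyEq.mp hx] with r hr
      simp [hr]
    exact contDiffAt_const.congr_of_eventuallyEq h0

/-- The radial quadratic-form identity `Q_A(ψ) = Q_B(u)`:
for `ρ` twice continuously differentiable and positive on `(0,∞)`, `ψ` smooth and
compactly supported in `(0,∞)`, and `u(r) = ρ(r) ψ(r) / r`, one has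
`∫₀^∞ ψ'(r)² ρ(r)² dr = ∫₀^∞ (u'(r)² + (ρ''(r)/ρ(r)) u(r)²) r² dr`. -/
theorem stmt_7 (ρ ψ : ℝ → ℝ)
    (hρ : ContDiffOn ℝ 2 ρ (Set.Ioi 0))
    (hρpos : ∀ r ∈ Set.Ioi (0 : ℝ), 0 < ρ r)
    (hψ : ContDiff ℝ (⊤ : ℕ∞) ψ)
    (hψc : HasCompactSupport ψ)
    (hψsupp : tsupport ψ ⊆ Set.Ioi 0)
    (u : ℝ → ℝ) (hu : ∀ r, u r = ρ r * ψ r / r) :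
    ∫ r in Set.Ioi (0 : ℝ), (deriv ψ r) ^ 2 * (ρ r) ^ 2 =
      ∫ r in Set.Ioi (0 : ℝ),
        ((deriv u r) ^ 2 + (deriv (deriv ρ) r / ρ r) * (u r) ^ 2) * r ^ 2 := by
  have hψ1 : ContDiff ℝ 1 ψ := hψ.of_le (by exact_mod_cast le_top)
  have hρ1 : ContDiffOn ℝ 1 ρ (Set.Ioi 0) := hρ.of_le (by norm_num)
  have hρ' : ContDiffOn ℝ 1 (deriv ρ) (Set.Ioi 0) :=
    hρ.deriv_of_isOpen isOpen_Ioi (by norm_num)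
  have hρd : ∀ r ∈ Set.Ioi (0 : ℝ), HasDerivAt ρ (deriv ρ r) r := fun r hr =>
    ((hρ1.contDiffAt (Ioi_mem_nhds hr)).differentiableAt one_ne_zero).hasDerivAt
  have hρdd : ∀ r ∈ Set.Ioi (0 : ℝ), HasDerivAt (deriv ρ) (deriv (deriv ρ) r) r := fun r hr =>
    ((hρ'.contDiffAt (Ioi_mem_nhds hr)).differentiableAt one_ne_zero).hasDerivAt
  have hψd : ∀ r, HasDerivAt ψ (deriv ψ r) r := fun r =>
    (hψ1.differentiable one_ne_zero r).hasDerivAt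
  set F : ℝ → ℝ := fun r => (ρ r * deriv ρ r - ρ r ^ 2 / r) * ψ r * ψ r with hF
  have hFc : HasCompactSupport F := hψc.mul_left
  have hF1 : ContDiff ℝ 1 F := by
    refine (contDiff_mul_of_tsupport_subset_Ioi ?_ hψ1 hψsupp).mul hψ1
    exact (hρ1.mul hρ').sub ((hρ1.pow 2).div contDiffOn_id fun r hr => ne_of_gt hr)
  have hψ0 : ψ 0 = 0 := image_eq_zero_of_notMem_tsupport fun h => lt_irrefl (0 : ℝ) (hψsupp h)
  have hFint : ∫ r in Set.Ioi (0 : ℝ), deriv F r = 0 := by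
    rw [hFc.integral_Ioi_deriv_eq hF1]
    simp [hF, hψ0]
  have hcont : Continuous fun r => ρ r ^ 2 * deriv ψ r * deriv ψ r := by
    have hψ'c : ContDiff ℝ 0 (deriv ψ) := contDiff_zero.mpr (hψ1.continuous_deriv le_rfl)
    exact (contDiff_mul_of_tsupport_subset_Ioi ((hρ1.pow 2).of_le zero_le_one) hψ'c
      (tsupport_deriv_subset.trans hψsupp)).continuous.mul hψ'c.continuous
  have hint : Integrable fun r => (deriv ψ r) ^ 2 * (ρ r) ^ 2 := by
    have h := hcont.integrable_of_hasCompactSupport (μ := volume) hψc.deriv.mul_left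
    refine h.congr (Eventually.of_forall fun r => ?_)
    ring
  have hint' : Integrable (deriv F) :=
    (hF1.continuous_deriv le_rfl).integrable_of_hasCompactSupport hFc.deriv
  have key : ∀ r ∈ Set.Ioi (0 : ℝ),
      ((deriv u r) ^ 2 + (deriv (deriv ρ) r / ρ r) * (u r) ^ 2) * r ^ 2 =
        (deriv ψ r) ^ 2 * (ρ r) ^ 2 + deriv F r := by
    intro r hr
    have hr0 : r ≠ 0 := ne_of_gt hr
    have hρ0 : ρ r ≠ 0 := (hρpos r hr).ne'
    have hu' := ((hρd r hr).fun_mul (hψd r)).fun_div (hasDerivAt_id' r) hr0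
    rw [← show u = fun r => ρ r * ψ r / r from funext hu] at hu'
    have hF' : HasDerivAt F _ r :=
      ((((hρd r hr).fun_mul (hρdd r hr)).fun_sub
        (((hρd r hr).fun_pow 2).fun_div (hasDerivAt_id' r) hr0)).fun_mul (hψd r)).fun_mul (hψd r)
    rw [hu'.deriv, hF'.deriv, hu r]
    field_simp
    ring
  rw [setIntegral_congr_fun measurableSet_Ioi key,
    integral_add hint.integrableOn hint'.integrableOn, hFint, add_zero]
end

section
/- For every z with 0 ≤ z < 1, the limit as y → 0⁺ of (j_z(y) − 2/9)/y² equals −(4 − z²)/270. In particular, lim_{y→0⁺} j_z(y) = 2/9. -/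
/-!
Near `0` the integrand of the tortoise coordinate expands as
`t² + 2z t³ + (4z² - 1) t⁴ + O(t⁵)`, so `X z y = y³ q` with
`q = 1/3 + (z/2) y + ((4z² - 1)/5 + s) y²`, where `s = s(y) → 0` (`tendsto_err`).
After the substitution `x = y³ q` all negative powers of `y` in `w` cancel: the constant term is
`12/27 - 2/9 = 2/9`, the coefficient of `y` vanishes, and `j z y - 2/9 = y² F(y, s)` for a
polynomial `F` (`quot`). By continuity the limit is `F(0, 0) = -(4 - z²)/270`.
-/

open Real Topology Filter MeasureTheory

/-- The function `w(x,y,z)`. -/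
noncomputable def w (x y z : ℝ) : ℝ :=
  (-6 * z / y ^ 4 + (8 + 28 * z ^ 2) / y ^ 5 - (52 * z + 32 * z ^ 3) / y ^ 6
      + (20 + 76 * z ^ 2) / y ^ 7 - 54 * z / y ^ 8 + 12 / y ^ 9) * x ^ 3
    + (2 * z / y ^ 3 - (2 + 4 * z ^ 2) / y ^ 4 + 6 * z / y ^ 5 - 2 / y ^ 6) * x ^ 2

/-- The function `j_z(y) = w(X_z(y), y, z)`. -/
noncomputable def j (z y : ℝ) : ℝ := w (X z y) y z

/-- The difference between `X z y / y⁵` and its expansion through the constant term. -/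
noncomputable def err (z y : ℝ) : ℝ :=
  (X z y - (y ^ 3 / 3 + z / 2 * y ^ 4 + (4 * z ^ 2 - 1) / 5 * y ^ 5)) / y ^ 5

/-- The polynomial `F` with `j z y - 2/9 = y² F(y, err z y)`. The auxiliary values satisfy
`A = z/2 + y B` and `q = 1/3 + y A = X z y / y³` when `s = err z y`. -/
noncomputable def quot (z y s : ℝ) : ℝ :=
  let B := (4 * z ^ 2 - 1) / 5 + s
  let A := z / 2 + y * B
  let q := 1 / 3 + y * A
  8 / 3 * B + 12 * (A ^ 2 + y * A ^ 3) - 54 * z * (A / 3 + y * A ^ 2 + y ^ 2 * A ^ 3)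
    + ((20 + 76 * z ^ 2) - (52 * z + 32 * z ^ 3) * y + (8 + 28 * z ^ 2) * y ^ 2
        - 6 * z * y ^ 3) * q ^ 3
    - 2 * A ^ 2 + 6 * z * (2 / 3 * A + y * A ^ 2) - (2 + 4 * z ^ 2) * q ^ 2 + 2 * z * y * q ^ 2

lemma denom_ge (z t : ℝ) : 1 - z ^ 2 ≤ t ^ 2 - 2 * t * z + 1 := by
  nlinarith [sq_nonneg (t - z)]

/-- The Taylor remainder of the integrand is
`t⁵ ((8z³ - 4z) - (4z² - 1) t) / (t² - 2tz + 1)`, hence at most `20 y⁵ / (1 - z²)` on `[0, y]`. -/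
lemma abs_X_sub_le {z y : ℝ} (hz0 : 0 ≤ z) (hz1 : z < 1) (hy0 : 0 < y) (hy1 : y ≤ 1) :
    |X z y - (y ^ 3 / 3 + z / 2 * y ^ 4 + (4 * z ^ 2 - 1) / 5 * y ^ 5)|
      ≤ 20 / (1 - z ^ 2) * y ^ 5 * y := by
  have hz : 0 < 1 - z ^ 2 := by nlinarith
  have hD : ∀ t : ℝ, 0 < t ^ 2 - 2 * t * z + 1 := fun t => hz.trans_le (denom_ge z t)
  have hpoly : ∫ t in (0:ℝ)..y, (t ^ 2 + 2 * z * t ^ 3 + (4 * z ^ 2 - 1) * t ^ 4)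
      = y ^ 3 / 3 + z / 2 * y ^ 4 + (4 * z ^ 2 - 1) / 5 * y ^ 5 := by
    rw [intervalIntegral.integral_add, intervalIntegral.integral_add,
      intervalIntegral.integral_const_mul, intervalIntegral.integral_const_mul,
      integral_pow, integral_pow, integral_pow]
    · norm_num
      ring
    all_goals exact Continuous.intervalIntegrable (by fun_prop) _ _
  rw [← hpoly, X, ← intervalIntegral.integral_sub]
  rotate_left
  · refine Continuous.intervalIntegrable ?_ _ _
    exact Continuous.div (by fun_prop) (by fun_prop) fun t => (hD t).ne'
  · exact Continuous.intervalIntegrable (by fun_prop) _ _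
  have key := intervalIntegral.norm_integral_le_of_norm_le_const (a := 0) (b := y)
    (C := 20 / (1 - z ^ 2) * y ^ 5)
    (f := fun t : ℝ => t ^ 2 / (t ^ 2 - 2 * t * z + 1)
      - (t ^ 2 + 2 * z * t ^ 3 + (4 * z ^ 2 - 1) * t ^ 4)) ?_
  · simpa [abs_of_pos hy0] using key
  intro t ht
  rw [Set.uIoc_of_le hy0.le] at ht
  obtain ⟨ht0, hty⟩ := ht
  have heq : t ^ 2 / (t ^ 2 - 2 * t * z + 1)
      - (t ^ 2 + 2 * z * t ^ 3 + (4 * z ^ 2 - 1) * t ^ 4)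
      = ((8 * z ^ 3 - 4 * z) - (4 * z ^ 2 - 1) * t) / (t ^ 2 - 2 * t * z + 1) * t ^ 5 := by
    have := (hD t).ne'
    rw [div_mul_eq_mul_div, eq_div_iff this, sub_mul, div_mul_cancel₀ _ this]
    ring
  have hnum : |(8 * z ^ 3 - 4 * z) - (4 * z ^ 2 - 1) * t| ≤ 20 := by
    have ht1 : t ≤ 1 := hty.trans hy1
    have h2 : 0 ≤ z ^ 2 := by positivity
    have h3 : 0 ≤ z ^ 3 := by positivity
    have h31 : z ^ 3 ≤ 1 := pow_le_one₀ hz0 hz1.le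
    have h4 : 0 ≤ z ^ 2 * t := by positivity
    have h41 : z ^ 2 * t ≤ 1 := mul_le_one₀ (by linarith) ht0.le ht1
    rw [abs_le]
    constructor <;> linarith
  rw [heq, Real.norm_eq_abs, abs_mul, abs_div, abs_of_pos (hD t), abs_of_pos (pow_pos ht0 5)]
  have := denom_ge z t
  gcongr

lemma tendsto_err {z : ℝ} (hz0 : 0 ≤ z) (hz1 : z < 1) :
    Tendsto (err z) (𝓝[>] 0) (𝓝 0) := by
  have hlim : Tendsto (fun y : ℝ => 20 / (1 - z ^ 2) * y) (𝓝[>] 0) (𝓝 0) := by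
    have h : Continuous fun y : ℝ => 20 / (1 - z ^ 2) * y := by fun_prop
    simpa using (h.tendsto 0).mono_left nhdsWithin_le_nhds
  refine squeeze_zero_norm' ?_ hlim
  filter_upwards [Ioc_mem_nhdsGT (zero_lt_one' ℝ)] with y ⟨hy0, hy1⟩
  have hy5 : 0 < y ^ 5 := by positivity
  rw [err, Real.norm_eq_abs, abs_div, abs_of_pos hy5, div_le_iff₀ hy5]
  linarith [abs_X_sub_le hz0 hz1 hy0 hy1]

lemma j_sub_eq (z : ℝ) {y : ℝ} (hy : y ≠ 0) :
    j z y - 2 / 9 = y ^ 2 * quot z y (err z y) := by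
  have hX : X z y = y ^ 3 * (1 / 3 + y * (z / 2 + y * ((4 * z ^ 2 - 1) / 5 + err z y))) := by
    rw [err]
    field_simp
    ring
  rw [j, hX]
  generalize err z y = s
  simp only [w, quot]
  generalize hB : (4 * z ^ 2 - 1) / 5 + s = B
  generalize hA : z / 2 + y * B = A
  -- `A` is kept abstract while denominators are cleared; its value is needed only for the
  -- coefficient of `y`, where it produces the cancellation.
  have hw : ∀ q : ℝ, (-6 * z / y ^ 4 + (8 + 28 * z ^ 2) / y ^ 5 - (52 * z + 32 * z ^ 3) / y ^ 6
      + (20 + 76 * z ^ 2) / y ^ 7 - 54 * z / y ^ 8 + 12 / y ^ 9) * (y ^ 3 * q) ^ 3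
    + (2 * z / y ^ 3 - (2 + 4 * z ^ 2) / y ^ 4 + 6 * z / y ^ 5 - 2 / y ^ 6) * (y ^ 3 * q) ^ 2
    = (-6 * z * y ^ 5 + (8 + 28 * z ^ 2) * y ^ 4 - (52 * z + 32 * z ^ 3) * y ^ 3
      + (20 + 76 * z ^ 2) * y ^ 2 - 54 * z * y + 12) * q ^ 3
    + (2 * z * y ^ 3 - (2 + 4 * z ^ 2) * y ^ 2 + 6 * z * y - 2) * q ^ 2 := by
    intro q
    field_simp
  rw [hw]
  linear_combination (-8 / 3 * y) * hA

/-- For `0 ≤ z < 1`, `(j_z(y) - 2/9)/y² → -(4 - z²)/270` as `y → 0⁺`;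
in particular `j_z(y) → 2/9` as `y → 0⁺`. -/
theorem stmt_9 (z : ℝ) (hz0 : 0 ≤ z) (hz1 : z < 1) :
    Tendsto (fun y : ℝ => (j z y - 2 / 9) / y ^ 2) (𝓝[>] 0) (𝓝 (-(4 - z ^ 2) / 270)) ∧
    Tendsto (fun y : ℝ => j z y) (𝓝[>] 0) (𝓝 (2 / 9)) := by
  have hid : Tendsto (fun y : ℝ => y) (𝓝[>] 0) (𝓝 0) := nhdsWithin_le_nhds
  have hF : Tendsto (fun y : ℝ => quot z y (err z y)) (𝓝[>] 0) (𝓝 (-(4 - z ^ 2) / 270)) := by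
    have hc : Continuous fun p : ℝ × ℝ => quot z p.1 p.2 := by
      unfold quot
      fun_prop
    have h := (hc.tendsto (0, 0)).comp (hid.prodMk_nhds (tendsto_err hz0 hz1))
    have h0 : quot z 0 0 = -(4 - z ^ 2) / 270 := by
      simp only [quot]
      ring
    rw [← h0]
    exact h
  constructor
  · refine hF.congr' ?_
    filter_upwards [self_mem_nhdsWithin] with y hy
    have hy : y ≠ 0 := ne_of_gt hy
    rw [j_sub_eq z hy, mul_div_cancel_left₀ _ (pow_ne_zero 2 hy)]
  · have h := ((hid.pow 2).mul hF).const_add (2 / 9)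
    rw [zero_pow two_ne_zero, zero_mul, add_zero] at h
    refine h.congr' ?_
    filter_upwards [self_mem_nhdsWithin] with y hy
    rw [← j_sub_eq z (ne_of_gt hy)]
    ring
end

section
/- For every real y and every z with 0 ≤ z ≤ 1/2, p(y,z) ≠ 0; that is, the polynomial p has no real zeros in the strip 0 ≤ z ≤ 1/2. -/
/-!
In the variables `t = y z` and `s = y ^ 2 * (1 - 4 z ^ 2)`, so that `y ^ 2 = 4 t ^ 2 + s` and
`s ≥ 0` on the strip `0 ≤ z ≤ 1/2`, the function `y ^ 2 * p y z` is a polynomial of degree `6` in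
`s`,
`y ^ 2 * p y z = t ^ 2 * coeff0 t + coeff1 t * s + ... + coeff6 t * s ^ 6` (`sq_mul_p`).
Each of the univariate polynomials `coeff0, ..., coeff6` is strictly positive on `ℝ`. Hence
`p y z > 0` if `y ≠ 0`, because then `t` and `s` do not both vanish. For `y = 0` the value is
`p 0 z = 324 - 81 z ^ 2 > 0`.

Positivity of a coefficient `c` is certified by an exact identity
`2 m ^ 2 c = 2 g ^ 2 + 2 h ^ 2 + ∑ eᵢ (t ^ (i + 1) ± t ^ i) ^ 2 + ∑ dᵢ t ^ (2 i)` with `eᵢ, dᵢ ≥ 0`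
and `d₀ > 0`. Here `g` and `h` are integer roundings of `m` times the real and imaginary parts of
a complex polynomial `f` such that `|f| ^ 2` on `ℝ` is `c` with its even coefficients slightly
decreased (`f` collects the roots in the upper half plane); the remaining sums absorb this
decrease and the rounding error.
-/

open Real Topology Filter MeasureTheory

/-- The polynomial `p(y,z)` arising from the resultant of `q₁` and `q₂`. -/
noncomputable def p (y z : ℝ) : ℝ :=
  (-1536 * y ^ 9 + 4608 * y ^ 7) * z ^ 9
    + (3452 * y ^ 10 + 2040 * y ^ 8 - 20100 * y ^ 6) * z ^ 8
    + (-3504 * y ^ 11 - 16456 * y ^ 9 - 8608 * y ^ 7 + 36120 * y ^ 5) * z ^ 7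
    + (1947 * y ^ 12 + 20360 * y ^ 10 + 62966 * y ^ 8 + 48272 * y ^ 6 - 33769 * y ^ 4) * z ^ 6
    + (-576 * y ^ 13 - 11988 * y ^ 11 - 71800 * y ^ 9 - 153832 * y ^ 7 - 104440 * y ^ 5
        + 17900 * y ^ 3) * z ^ 5
    + (72 * y ^ 14 + 3552 * y ^ 12 + 38762 * y ^ 10 + 143492 * y ^ 8 + 208760 * y ^ 6
        + 109100 * y ^ 4 - 5530 * y ^ 2) * z ^ 4
    + (-432 * y ^ 13 + 10464 * y ^ 11 - 66316 * y ^ 9 - 154672 * y ^ 7 - 151552 * y ^ 5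
        - 62848 * y ^ 3 + 972 * y) * z ^ 3
    + (1152 * y ^ 12 + 15384 * y ^ 10 + 57803 * y ^ 8 + 83120 * y ^ 6 + 58958 * y ^ 4
        + 20912 * y ^ 2 - 81) * z ^ 2
    + (-1440 * y ^ 11 - 10536 * y ^ 9 - 21648 * y ^ 7 - 20824 * y ^ 5 - 11680 * y ^ 3
        - 3888 * y) * z
    + 720 * y ^ 10 + 2160 * y ^ 8 + 2760 * y ^ 6 + 1908 * y ^ 4 + 944 * y ^ 2 + 324

noncomputable section

/-- The coefficient of `s ^ 0` in `y ^ 2 * p y z`, divided by `t ^ 2`. -/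
def coeff0 (t : ℝ) : ℝ :=
  294912 * t ^ 14 - 2359296 * t ^ 13 + 8854272 * t ^ 12 + 1523712 * t ^ 11 + 29983680 * t ^ 10
    - 32630400 * t ^ 9 + 27208512 * t ^ 8 - 17932032 * t ^ 7 + 9539388 * t ^ 6 - 4139208 * t ^ 5
    + 1468071 * t ^ 4 - 420372 * t ^ 3 + 93222 * t ^ 2 - 14580 * t + 1215

lemma coeff0_pos (t : ℝ) : 0 < coeff0 t := by
  have key : 5000 * coeff0 t = 2 * (27126 * t ^ 7 - 108720 * t ^ 6 - 450900 * t ^ 5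
    + 450899 * t ^ 4 + 96749 * t ^ 3 - 108201 * t ^ 2 + 12830 * t + 628) ^ 2 + 2 * (-186369 * t ^ 6
    + 318446 * t ^ 5 + 367858 * t ^ 4 - 315682 * t ^ 3 + 17879 * t ^ 2 + 16185 * t
    - 1624) ^ 2 + 4400 * (t + 1) ^ 2 + 87450 * (t ^ 2 - t) ^ 2 + 174738 * (t ^ 3
    - t ^ 2) ^ 2 + 40784 * (t ^ 4 - t ^ 3) ^ 2 + 553240 * (t ^ 5 - t ^ 4) ^ 2 + 336600 * (t ^ 6
    + t ^ 5) ^ 2 + 37440 * (t ^ 7 + t ^ 6) ^ 2 + 2882808 * t ^ 14 + 88554438 * t ^ 12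
    + 298794360 * t ^ 10 + 272118538 * t ^ 8 + 95339872 * t ^ 6 + 14904008 * t ^ 4
    + 834796 * t ^ 2 + 7080 := by
    unfold coeff0; ring
  have hpos : 0 < 5000 * coeff0 t := by rw [key]; positivity
  linarith

/-- The coefficient of `s ^ 1` in `y ^ 2 * p y z`. -/
def coeff1 (t : ℝ) : ℝ :=
  442368 * t ^ 14 - 3391488 * t ^ 13 + 12122880 * t ^ 12 + 1309440 * t ^ 11 + 35043168 * t ^ 10
    - 34042560 * t ^ 9 + 24955752 * t ^ 8 - 14205408 * t ^ 7 + 6414672 * t ^ 6 - 2316408 * t ^ 5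
    + 672348 * t ^ 4 - 156288 * t ^ 3 + 28464 * t ^ 2 - 3888 * t + 324

lemma coeff1_pos (t : ℝ) : 0 < coeff1 t := by
  have key : 1800 * coeff1 t = 2 * (19923 * t ^ 7 - 76602 * t ^ 6 - 279591 * t ^ 5
    + 256158 * t ^ 4 + 44983 * t ^ 3 - 46110 * t ^ 2 + 4351 * t + 263) ^ 2 + 2 * (-127085 * t ^ 6
    + 204049 * t ^ 5 + 200301 * t ^ 4 - 155751 * t ^ 3 + 7346 * t ^ 2 + 6145 * t
    - 471) ^ 2 + 764 * (t + 1) ^ 2 + 70820 * (t ^ 2 - t) ^ 2 + 351570 * (t ^ 3 + t ^ 2) ^ 2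
    + 102 * (t ^ 4 + t ^ 3) ^ 2 + 155820 * (t ^ 5 - t ^ 4) ^ 2 + 299098 * (t ^ 6
    + t ^ 5) ^ 2 + 55908 * (t ^ 7 - t ^ 6) ^ 2 + 2354634 * t ^ 14 + 65067708 * t ^ 12
    + 188089686 * t ^ 10 + 135138424 * t ^ 8 + 34140792 * t ^ 6 + 2976694 * t ^ 4
    + 126748 * t ^ 2 + 416 := by
    unfold coeff1; ring
  have hpos : 0 < 1800 * coeff1 t := by rw [key]; positivity
  linarith

/-- The coefficient of `s ^ 2` in `y ^ 2 * p y z`. -/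
def coeff2 (t : ℝ) : ℝ :=
  276480 * t ^ 12 - 2027520 * t ^ 11 + 6883872 * t ^ 10 - 25536 * t ^ 9 + 16579484 * t ^ 8
    - 13987432 * t ^ 7 + 8716358 * t ^ 6 - 4088104 * t ^ 5 + 1471160 * t ^ 4 - 401440 * t ^ 3
    + 81854 * t ^ 2 - 11680 * t + 944

lemma coeff2_pos (t : ℝ) : 0 < coeff2 t := by
  have key : 50 * coeff2 t = 2 * (2616 * t ^ 6 - 9688 * t ^ 5 - 27439 * t ^ 4 + 21717 * t ^ 3
    + 670 * t ^ 2 - 1621 * t + 131) ^ 2 + 2 * (-14835 * t ^ 5 + 21771 * t ^ 4 + 13456 * t ^ 3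
    - 9357 * t ^ 2 + 838 * t + 79) ^ 2 + 298 * (t + 1) ^ 2 + 2570 * (t ^ 2 + t) ^ 2
    + 51044 * (t ^ 3 - t ^ 2) ^ 2 + 39376 * (t ^ 4 + t ^ 3) ^ 2 + 25762 * (t ^ 5
    + t ^ 4) ^ 2 + 384 * (t ^ 6 - t ^ 5) ^ 2 + 136704 * t ^ 12 + 3420012 * t ^ 10
    + 8204082 * t ^ 8 + 4264082 * t ^ 6 + 706604 * t ^ 4 + 35794 * t ^ 2 + 98 := by
    unfold coeff2; ring
  have hpos : 0 < 50 * coeff2 t := by rw [key]; positivity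
  linarith

/-- The coefficient of `s ^ 3` in `y ^ 2 * p y z`. -/
def coeff3 (t : ℝ) : ℝ :=
  92160 * t ^ 10 - 645120 * t ^ 9 + 2074032 * t ^ 8 - 364272 * t ^ 7 + 4023592 * t ^ 6
    - 2818616 * t ^ 5 + 1413940 * t ^ 4 - 501040 * t ^ 3 + 127280 * t ^ 2 - 20824 * t
    + 1908

lemma coeff3_pos (t : ℝ) : 0 < coeff3 t := by
  have key : 18 * coeff3 t = 2 * (902 * t ^ 5 - 3220 * t ^ 4 - 6845 * t ^ 3 + 4701 * t ^ 2
    - 144 * t - 99) ^ 2 + 2 * (-4502 * t ^ 4 + 6201 * t ^ 3 + 2143 * t ^ 2 - 1296 * t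
    + 83) ^ 2 + 792 * (t - 1) ^ 2 + 14508 * (t ^ 2 + t) ^ 2 + 6288 * (t ^ 3 - t ^ 2) ^ 2
    + 7048 * (t ^ 4 - t ^ 3) ^ 2 + 2800 * (t ^ 5 + t ^ 4) ^ 2 + 28872 * t ^ 10 + 746680 * t ^ 8
    + 1458044 * t ^ 6 + 469232 * t ^ 4 + 25156 * t ^ 2 + 172 := by
    unfold coeff3; ring
  have hpos : 0 < 18 * coeff3 t := by rw [key]; positivity
  linarith

/-- The coefficient of `s ^ 4` in `y ^ 2 * p y z`. -/
def coeff4 (t : ℝ) : ℝ :=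
  17280 * t ^ 8 - 115200 * t ^ 7 + 349467 * t ^ 6 - 148308 * t ^ 5 + 519242 * t ^ 4
    - 277036 * t ^ 3 + 101003 * t ^ 2 - 21648 * t + 2760

lemma coeff4_pos (t : ℝ) : 0 < coeff4 t := by
  have key : 18 * coeff4 t = 2 * (390 * t ^ 4 - 1328 * t ^ 3 - 1944 * t ^ 2 + 1126 * t
    - 49) ^ 2 + 2 * (-1684 * t ^ 3 + 2190 * t ^ 2 + 287 * t - 148) ^ 2 + 468 * (t
    + 1) ^ 2 + 1104 * (t ^ 2 - t) ^ 2 + 396 * (t ^ 3 - t ^ 2) ^ 2 + 960 * (t ^ 4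
    - t ^ 3) ^ 2 + 5880 * t ^ 8 + 122810 * t ^ 6 + 185368 * t ^ 4 + 31448 * t ^ 2
    + 602 := by
    unfold coeff4; ring
  have hpos : 0 < 18 * coeff4 t := by rw [key]; positivity
  linarith

/-- The coefficient of `s ^ 5` in `y ^ 2 * p y z`. -/
def coeff5 (t : ℝ) : ℝ :=
  1728 * t ^ 6 - 10944 * t ^ 5 + 31200 * t ^ 4 - 24096 * t ^ 3 + 32664 * t ^ 2 - 10536 * t
    + 2160

lemma coeff5_pos (t : ℝ) : 0 < coeff5 t := by
  have key : 8 * coeff5 t = 2 * (82 * t ^ 3 - 266 * t ^ 2 - 188 * t + 91) ^ 2 + 2 * (-287 * t ^ 2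
    + 368 * t - 11) ^ 2 + 168 * (t + 1) ^ 2 + 92 * (t ^ 2 - t) ^ 2 + 152 * (t ^ 3
    - t ^ 2) ^ 2 + 224 * t ^ 6 + 4770 * t ^ 4 + 3712 * t ^ 2 + 308 := by
    unfold coeff5; ring
  have hpos : 0 < 8 * coeff5 t := by rw [key]; positivity
  linarith

/-- The coefficient of `s ^ 6` in `y ^ 2 * p y z`. -/
def coeff6 (t : ℝ) : ℝ :=
  72 * t ^ 4 - 432 * t ^ 3 + 1152 * t ^ 2 - 1440 * t + 720

lemma coeff6_pos (t : ℝ) : 0 < coeff6 t := by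
  have key : 2 * coeff6 t = 2 * (8 * t ^ 2 - 26 * t + 15) ^ 2 + 2 * (-15 * t + 22) ^ 2
    + 16 * (t ^ 2 - t) ^ 2 + 6 * t ^ 2 + 22 := by
    unfold coeff6; ring
  have hpos : 0 < 2 * coeff6 t := by rw [key]; positivity
  linarith

end

/-- The expansion of `y ^ 2 * p y z` in powers of `s = y ^ 2 * (1 - 4 z ^ 2)`, with coefficients
depending on `t = y z`. -/
lemma sq_mul_p (y z : ℝ) :
    y ^ 2 * p y z = (y * z) ^ 2 * coeff0 (y * z)
      + coeff1 (y * z) * (y ^ 2 * (1 - 4 * z ^ 2))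
      + coeff2 (y * z) * (y ^ 2 * (1 - 4 * z ^ 2)) ^ 2
      + coeff3 (y * z) * (y ^ 2 * (1 - 4 * z ^ 2)) ^ 3
      + coeff4 (y * z) * (y ^ 2 * (1 - 4 * z ^ 2)) ^ 4
      + coeff5 (y * z) * (y ^ 2 * (1 - 4 * z ^ 2)) ^ 5
      + coeff6 (y * z) * (y ^ 2 * (1 - 4 * z ^ 2)) ^ 6 := by
  unfold p coeff0 coeff1 coeff2 coeff3 coeff4 coeff5 coeff6
  ring

/-- The polynomial `p` has no real zeros in the strip `0 ≤ z ≤ 1/2`. -/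
theorem stmt_13 (y z : ℝ) (hz0 : 0 ≤ z) (hz1 : z ≤ 1 / 2) : p y z ≠ 0 := by
  have hz2 : 0 ≤ 1 - 4 * z ^ 2 := by nlinarith
  rcases eq_or_ne y 0 with rfl | hy
  · have h : p 0 z = 324 - 81 * z ^ 2 := by unfold p; ring
    rw [h]
    nlinarith
  · have hs : 0 ≤ y ^ 2 * (1 - 4 * z ^ 2) := by positivity
    have h0 := coeff0_pos (y * z)
    have h1 := coeff1_pos (y * z)
    have h2 := coeff2_pos (y * z)
    have h3 := coeff3_pos (y * z)
    have h4 := coeff4_pos (y * z)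
    have h5 := coeff5_pos (y * z)
    have h6 := coeff6_pos (y * z)
    -- The first two terms cannot both vanish, since `t = 0` forces `s = y ^ 2 > 0`.
    have hlow : 0 < (y * z) ^ 2 * coeff0 (y * z)
        + coeff1 (y * z) * (y ^ 2 * (1 - 4 * z ^ 2)) := by
      rcases hz0.eq_or_lt with rfl | hz
      · have hs' : 0 < y ^ 2 * (1 - 4 * (0 : ℝ) ^ 2) := by
          have := pow_pos (abs_pos.mpr hy) 2
          rw [sq_abs] at this
          linarith
        positivity
      · positivity
    have hpos : 0 < y ^ 2 * p y z := by
      rw [sq_mul_p]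
      generalize y ^ 2 * (1 - 4 * z ^ 2) = s at hs hlow ⊢
      positivity
    intro h
    rw [h, mul_zero] at hpos
    exact lt_irrefl _ hpos
end

section
/- For every y > 0, j_0'(y) ≠ 0; equivalently, setting x = y − arctan(y), one has (10y⁴ + 35y² + 27)·x² − (12y³ + 8y⁵)·x + y⁶ ≠ 0. (That is, the function j_0 has no critical points other than at y = 0.) -/
/-!
Write `s = y²` and `x = y - arctan y`. As a quadratic in `x`, the bracket
`(10y⁴ + 35y² + 27) x² - (12y³ + 8y⁵) x + y⁶` has two positive roots, and the point is that `x`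
lies above the larger one, so that the bracket is positive (`bracket_pos`). The larger root agrees
with `x` to leading order `y³/3` at the origin, so a sharp lower bound for `x` is needed. The
`[2/2]` convergent (in `s`) of the continued fraction of `arctan y / y` provides it
(`arctan_le_convergent`): `x ≥ h := y³ (315 + 161 s) / (945 + 1050 s + 225 s²)`. Both the value of
the quadratic at `h` and its slope there turn out to be, up to positive factors, polynomials in `s`
with nonnegative coefficients.

The statement about `deriv (j 0)` follows from the explicit formula for the derivative
(`hasDerivAt_j_zero`), which is `-4 y⁻¹⁰ x` times the bracket, together with `x > 0`.
-/

open Real Topology Filter MeasureTheory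

/-- A continued fraction convergent of `arctan` is an upper bound: the difference vanishes at `0`
and has derivative `14400 t¹⁰ / ((1 + t²) (945 + 1050 t² + 225 t⁴)²)`. -/
lemma arctan_le_convergent (y : ℝ) (hy : 0 ≤ y) :
    Real.arctan y ≤
      (945 * y + 735 * y ^ 3 + 64 * y ^ 5) / (945 + 1050 * y ^ 2 + 225 * y ^ 4) := by
  let F : ℝ → ℝ := fun t =>
    (945 * t + 735 * t ^ 3 + 64 * t ^ 5) / (945 + 1050 * t ^ 2 + 225 * t ^ 4) - Real.arctan t
  have hF : ∀ t : ℝ, HasDerivAt F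
      (14400 * t ^ 10 / ((1 + t ^ 2) * (945 + 1050 * t ^ 2 + 225 * t ^ 4) ^ 2)) t := by
    intro t
    have hD : (945 + 1050 * t ^ 2 + 225 * t ^ 4 : ℝ) ≠ 0 := by positivity
    have h1 : (1 + t ^ 2 : ℝ) ≠ 0 := by positivity
    have hnum : HasDerivAt (fun t : ℝ => 945 * t + 735 * t ^ 3 + 64 * t ^ 5)
        (945 * 1 + 735 * (3 * t ^ 2) + 64 * (5 * t ^ 4)) t := by
      simpa using (((hasDerivAt_id t).const_mul 945).fun_add
        ((hasDerivAt_pow 3 t).const_mul 735)).fun_add ((hasDerivAt_pow 5 t).const_mul 64)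
    have hden : HasDerivAt (fun t : ℝ => 945 + 1050 * t ^ 2 + 225 * t ^ 4)
        (1050 * (2 * t) + 225 * (4 * t ^ 3)) t := by
      simpa using (((hasDerivAt_pow 2 t).const_mul 1050).const_add 945).fun_add
        ((hasDerivAt_pow 4 t).const_mul 225)
    refine ((hnum.div hden hD).sub (Real.hasDerivAt_arctan t)).congr_deriv ?_
    field_simp
    ring
  have hmono : Monotone F := by
    refine monotone_of_deriv_nonneg (fun t => (hF t).differentiableAt) fun t => ?_
    rw [(hF t).deriv]
    positivity
  have h := hmono hy
  simp only [F] at h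
  norm_num at h
  linarith

lemma bracket_pos (y : ℝ) (hy : 0 < y) :
    0 < (10 * y ^ 4 + 35 * y ^ 2 + 27) * (y - Real.arctan y) ^ 2
      - (12 * y ^ 3 + 8 * y ^ 5) * (y - Real.arctan y) + y ^ 6 := by
  have hD : (0 : ℝ) < 945 + 1050 * y ^ 2 + 225 * y ^ 4 := by positivity
  set h : ℝ := y ^ 3 * (315 + 161 * y ^ 2) / (945 + 1050 * y ^ 2 + 225 * y ^ 4) with hh
  have hx : h ≤ y - Real.arctan y := by
    have e : h = y -
        (945 * y + 735 * y ^ 3 + 64 * y ^ 5) / (945 + 1050 * y ^ 2 + 225 * y ^ 4) := by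
      rw [hh]
      field_simp
      ring
    linarith [arctan_le_convergent y hy.le]
  have hval : 0 < (10 * y ^ 4 + 35 * y ^ 2 + 27) * h ^ 2
      - (12 * y ^ 3 + 8 * y ^ 5) * h + y ^ 6 := by
    have e : (10 * y ^ 4 + 35 * y ^ 2 + 27) * h ^ 2 - (12 * y ^ 3 + 8 * y ^ 5) * h + y ^ 6
        = y ^ 6 * (19845 * y ^ 2 + 27657 * y ^ 4 + 39935 * y ^ 6 + 20035 * y ^ 8)
          / (945 + 1050 * y ^ 2 + 225 * y ^ 4) ^ 2 := by
      rw [hh]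
      field_simp
      ring
    rw [e]
    positivity
  have hslope : 0 < 2 * (10 * y ^ 4 + 35 * y ^ 2 + 27) * h - (12 * y ^ 3 + 8 * y ^ 5) := by
    have e : 2 * (10 * y ^ 4 + 35 * y ^ 2 + 27) * h - (12 * y ^ 3 + 8 * y ^ 5)
        = y ^ 3 * (5670 + 10584 * y ^ 2 + 6470 * y ^ 4 + 1420 * y ^ 6)
          / (945 + 1050 * y ^ 2 + 225 * y ^ 4) := by
      rw [hh]
      field_simp
      ring
    rw [e]
    positivity
  -- Taylor expansion of the quadratic at `h`, evaluated at `x = h + d` with `d ≥ 0`.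
  obtain ⟨d, hd⟩ : ∃ d, y - Real.arctan y = h + d := ⟨y - Real.arctan y - h, by ring⟩
  have hd0 : 0 ≤ d := by linarith
  rw [hd]
  have h1 := mul_nonneg hd0 hslope.le
  have h2 : 0 ≤ (10 * y ^ 4 + 35 * y ^ 2 + 27) * d ^ 2 := by positivity
  linarith

lemma X_zero (y : ℝ) : X 0 y = y - Real.arctan y := by
  have hF : ∀ t : ℝ, HasDerivAt (fun t : ℝ => t - Real.arctan t)
      (t ^ 2 / (t ^ 2 - 2 * t * 0 + 1)) t := by
    intro t
    refine ((hasDerivAt_id t).sub (Real.hasDerivAt_arctan t)).congr_deriv ?_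
    have h1 : (1 + t ^ 2 : ℝ) ≠ 0 := by positivity
    have h2 : (t ^ 2 - 2 * t * 0 + 1 : ℝ) = 1 + t ^ 2 := by ring
    rw [h2]
    field_simp
    ring
  have hc : Continuous fun t : ℝ => t ^ 2 / (t ^ 2 - 2 * t * 0 + 1) := by
    refine Continuous.div (by fun_prop) (by fun_prop) fun t => ?_
    have h2 : (t ^ 2 - 2 * t * 0 + 1 : ℝ) = 1 + t ^ 2 := by ring
    rw [h2]
    positivity
  unfold X
  rw [intervalIntegral.integral_eq_sub_of_hasDerivAt (fun t _ => hF t)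
    (hc.intervalIntegrable _ _)]
  simp

lemma hasDerivAt_j_zero (y : ℝ) (hy : 0 < y) :
    HasDerivAt (j 0) (-4 / y ^ 10 * (y - Real.arctan y) *
      ((10 * y ^ 4 + 35 * y ^ 2 + 27) * (y - Real.arctan y) ^ 2
        - (12 * y ^ 3 + 8 * y ^ 5) * (y - Real.arctan y) + y ^ 6)) y := by
  have hy0 : y ≠ 0 := ne_of_gt hy
  -- This holds at `t = 0` too, both sides being `0` there since division by zero yields `0`.
  have hj : j 0 = fun t : ℝ =>
      (8 * t ^ 4 + 20 * t ^ 2 + 12) / t ^ 9 * (t - Real.arctan t) ^ 3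
        - (2 * t ^ 2 + 2) / t ^ 6 * (t - Real.arctan t) ^ 2 := by
    funext t
    rw [j, w, X_zero]
    rcases eq_or_ne t 0 with rfl | ht
    · simp
    · field_simp
      ring
  rw [hj]
  have hx : HasDerivAt (fun t : ℝ => t - Real.arctan t) (1 - 1 / (1 + y ^ 2)) y :=
    (hasDerivAt_id y).sub (Real.hasDerivAt_arctan y)
  have ha : HasDerivAt (fun t : ℝ => 8 * t ^ 4 + 20 * t ^ 2 + 12)
      (8 * (4 * y ^ 3) + 20 * (2 * y)) y := by
    simpa using (((hasDerivAt_pow 4 y).const_mul 8).fun_add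
      ((hasDerivAt_pow 2 y).const_mul 20)).add_const 12
  have hb : HasDerivAt (fun t : ℝ => 2 * t ^ 2 + 2) (2 * (2 * y)) y := by
    simpa using ((hasDerivAt_pow 2 y).const_mul 2).add_const 2
  have h9 : HasDerivAt (fun t : ℝ => t ^ 9) (9 * y ^ 8) y := by
    simpa using hasDerivAt_pow 9 y
  have h6 : HasDerivAt (fun t : ℝ => t ^ 6) (6 * y ^ 5) y := by
    simpa using hasDerivAt_pow 6 y
  refine (((ha.div h9 (pow_ne_zero 9 hy0)).mul (hx.pow 3)).sub
    ((hb.div h6 (pow_ne_zero 6 hy0)).mul (hx.pow 2))).congr_deriv ?_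
  have h1 : (1 + y ^ 2 : ℝ) ≠ 0 := by positivity
  simp only [Pi.pow_apply, Pi.div_apply]
  generalize y - Real.arctan y = x
  field_simp
  push_cast
  ring

/-- The function `j_0` has no critical points other than at `y = 0`:
for every `y > 0`, `j_0'(y) ≠ 0`, equivalently, with `x = y - arctan y`,
`(10y⁴ + 35y² + 27) x² - (12y³ + 8y⁵) x + y⁶ ≠ 0`. -/
theorem stmt_15 (y : ℝ) (hy : 0 < y) :
    deriv (j 0) y ≠ 0 ∧
    (10 * y ^ 4 + 35 * y ^ 2 + 27) * (y - Real.arctan y) ^ 2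
      - (12 * y ^ 3 + 8 * y ^ 5) * (y - Real.arctan y) + y ^ 6 ≠ 0 := by
  have hx : 0 < y - Real.arctan y := by
    have h := Real.lt_tan (Real.arctan_pos.2 hy) (Real.arctan_lt_pi_div_two y)
    rw [Real.tan_arctan] at h
    linarith
  refine ⟨?_, (bracket_pos y hy).ne'⟩
  rw [(hasDerivAt_j_zero y hy).deriv]
  have h4 : (-4 / y ^ 10 : ℝ) ≠ 0 := div_ne_zero (by norm_num) (pow_ne_zero 10 hy.ne')
  exact mul_ne_zero (mul_ne_zero h4 hx.ne') (bracket_pos y hy).ne'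
end

section
/- Let h(ξ,η) = 10η² + 35ξη + 27ξ² − 12ξ − 8η + 1. If ξ ≥ 0, η ≥ 0, h(ξ,η) = 0, and 20η + 35ξ ≤ 8 (i.e., (ξ,η) lies on the lower branch of the hyperbola h = 0 in the first quadrant), then ξ ≤ 1/9 and η ≤ 6/37. -/
open Real Topology Filter MeasureTheory

/-- The lower branch of the hyperbola `h(ξ,η) = 10η² + 35ξη + 27ξ² - 12ξ - 8η + 1 = 0`
in the first quadrant (where `20η + 35ξ ≤ 8`) is contained in the rectangle
`[0,1/9] × [0,6/37]`. -/
theorem stmt_17 (ξ η : ℝ) (hξ : 0 ≤ ξ) (hη : 0 ≤ η)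
    (hcurve : 10 * η ^ 2 + 35 * ξ * η + 27 * ξ ^ 2 - 12 * ξ - 8 * η + 1 = 0)
    (hlower : 20 * η + 35 * ξ ≤ 8) :
    ξ ≤ 1 / 9 ∧ η ≤ 6 / 37 := by
  have h1 : ξ ≤ 1 / 9 := by
    by_contra! hc
    -- The curve reads `(9ξ - 1)(3ξ - 1) = η(8 - 10η - 35ξ)`, and the right side is nonnegative
    -- on the lower branch, while `1/9 < ξ ≤ 8/35 < 1/3` makes the left side negative.
    have ha : 0 ≤ η * (8 - 10 * η - 35 * ξ) := mul_nonneg hη (by linarith)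
    have hb : 0 < (9 * ξ - 1) * (1 - 3 * ξ) := mul_pos (by linarith) (by linarith)
    nlinarith
  refine ⟨h1, ?_⟩
  by_contra! hc
  -- Along the lower branch `h` decreases in `η`, so `h(ξ,η) < h(ξ,6/37)`; the latter is negative
  -- for `0 ≤ ξ ≤ 1/9`.
  have ha : 0 < (η - 6 / 37) * (8 - 10 * (η + 6 / 37) - 35 * ξ) :=
    mul_pos (by linarith) (by linarith)
  have hb : 0 ≤ ξ * (1 / 9 - ξ) := mul_nonneg hξ (by linarith)
  nlinarith
end

section
/- For every z with 0 ≤ z ≤ 1/2 and every y > 0, j_z(y) < 2/9. (Consequently the rescaled super-extremal Reissner–Nordström potential with charge-to-mass ratio at least 2 satisfies condition (iii): sup_{x>0} x²·d/dx(x·v(φ_z(x),z)) = 2/9 < 1/4.) -/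
/-!
Put `s = z y` and `Y = y ^ 2`. With `u = X z y / y ^ 3`, `D = Y - 2 s + 1` and
`C = 12 - 30 s + 8 Y + 16 s ^ 2 - 6 s Y` one has `j z y = D u ^ 2 (C u - 2 (1 - s))`.

The proof replaces `u` by an explicit upper bound `U = M / P`, where `M = barrierDen s Y` and
`P = barrierNum s Y` are polynomials chosen so that `1 / U = P / M` agrees with
`1 / u = 3 - 9 s / 2 + O(y ^ 2)` to first order and stays slightly below it from second order on.
Two polynomial inequalities carry the argument.

* `supersolution`: `y ^ 3 U` has derivative at least `y ^ 2 / D`, the integrand of `X`.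
  Since both vanish at `0`, `X z y ≤ y ^ 3 U` (`X_le_barrier`).
* `level_bound`: `D U ^ 2 (C U - 2 (1 - s)) < 2 / 9`, cleared of denominators.

As a function of `u`, the quantity `D u ^ 2 (C u - 2 (1 - s))` is nonpositive or increasing, except
when `C < 0` and `s > 1`; there the term with `C` is dropped and `level_bound_of_one_le` is used.

The hypothesis `0 ≤ z ≤ 1 / 2` becomes `s ≥ 0` and `Y = 4 s ^ 2 + r` with `r ≥ 0`. Expanding in
powers of `r`, the polynomials have coefficients in `s` alone that are bounded below one at a time.
On a compact interval `[a, b]` this is done by expanding in the Bernstein products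
`(s - a) ^ i (b - s) ^ k`, and on `[a, ∞)` in powers of `s - a`: all coefficients in these
bases turn out nonnegative.
-/

open Real Topology Filter MeasureTheory

/-- The numerator `P` of the lower bound `P / M` for `y ^ 3 / X z y`, in terms of `s = z y` and
`Y = y ^ 2`. -/
noncomputable def barrierNum (s Y : ℝ) : ℝ :=
  3 - 21 / 4 * s + 501 / 200 * Y + 29 / 40 * s ^ 2 - 49 / 50 * s * Y + 57 / 250 * Y ^ 2

/-- The denominator `M` of the lower bound `P / M` for `y ^ 3 / X z y`, in terms of `s = z y` and
`Y = y ^ 2`. -/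
noncomputable def barrierDen (s Y : ℝ) : ℝ := 1 - 1 / 4 * s + 6 / 25 * Y

/-! ### Univariate bounds -/

/-- The products in which a polynomial is expanded on `[a, b]`. -/
lemma bernstein_product_nonneg {s a b : ℝ} (ha : a ≤ s) (hb : s ≤ b) (i k : ℕ) :
    0 ≤ (s - a) ^ i * (b - s) ^ k :=
  mul_nonneg (pow_nonneg (sub_nonneg.2 ha) i) (pow_nonneg (sub_nonneg.2 hb) k)

lemma shift_nonneg {s a : ℝ} (ha : a ≤ s) (i : ℕ) : 0 ≤ (s - a) ^ i :=
  pow_nonneg (sub_nonneg.2 ha) i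

/-- With `supersolution_coeff_one`, `supersolution_coeff_two` and `supersolution_coeff_three`: lower
bounds for the coefficients of `r ^ 0`, ..., `r ^ 3` in the difference of the two sides of
`supersolution`, after division by `s ^ 2` in the case of `r ^ 0`. -/
lemma supersolution_coeff_zero {s : ℝ} (hs : 0 ≤ s) :
    0 ≤ 1 / 20 - 271 / 200 * s + 686783 / 40000 * s ^ 2 - 109167 / 2500 * s ^ 3
      + 118448 / 3125 * s ^ 4 - 26592 / 3125 * s ^ 5 + 10944 / 15625 * s ^ 6 := by
  rcases le_total s (1 / 5) with h0 | h0
  · have h := bernstein_product_nonneg hs h0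
    linarith [h 0 6, h 1 5, h 2 4, h 3 3, h 4 2, h 5 1, h 6 0]
  rcases le_total s (9 / 10) with h1 | h1
  · have h := bernstein_product_nonneg h0 h1
    linarith [h 0 6, h 1 5, h 2 4, h 3 3, h 4 2, h 5 1, h 6 0]
  rcases le_total s (11 / 4) with h2 | h2
  · have h := bernstein_product_nonneg h1 h2
    linarith [h 0 6, h 1 5, h 2 4, h 3 3, h 4 2, h 5 1, h 6 0]
  have h := shift_nonneg h2
  linarith [h 1, h 2, h 3, h 4, h 5, h 6]

lemma supersolution_coeff_one {s : ℝ} (hs : 0 ≤ s) :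
    7 / 100 ≤ 3 / 40 + 9 / 50 * s + 87857 / 20000 * s ^ 2 - 213579 / 10000 * s ^ 3
      + 83626 / 3125 * s ^ 4 - 19944 / 3125 * s ^ 5 + 10944 / 15625 * s ^ 6 := by
  rcases le_total s (1 / 2) with h0 | h0
  · have h := bernstein_product_nonneg hs h0
    linarith [h 0 6, h 1 5, h 2 4, h 3 3, h 4 2, h 5 1, h 6 0]
  rcases le_total s (31 / 20) with h1 | h1
  · have h := bernstein_product_nonneg h0 h1
    linarith [h 0 6, h 1 5, h 2 4, h 3 3, h 4 2, h 5 1, h 6 0]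
  have h := shift_nonneg h1
  linarith [h 1, h 2, h 3, h 4, h 5, h 6]

lemma supersolution_coeff_two {s : ℝ} (hs : 0 ≤ s) :
    -13 / 50 ≤ 1503 / 40000 - 26103 / 10000 * s + 19604 / 3125 * s ^ 2 - 4986 / 3125 * s ^ 3
      + 4104 / 15625 * s ^ 4 := by
  rcases le_total s (1 / 5) with h0 | h0
  · have h := bernstein_product_nonneg hs h0
    linarith [h 0 4, h 1 3, h 2 2, h 3 1, h 4 0]
  rcases le_total s (7 / 20) with h1 | h1
  · have h := bernstein_product_nonneg h0 h1
    linarith [h 0 4, h 1 3, h 2 2, h 3 1, h 4 0]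
  rcases le_total s (31 / 20) with h2 | h2
  · have h := bernstein_product_nonneg h1 h2
    linarith [h 0 4, h 1 3, h 2 2, h 3 1, h 4 0]
  have h := shift_nonneg h2
  linarith [h 1, h 2, h 3, h 4]

lemma supersolution_coeff_three {s : ℝ} (hs : 0 ≤ s) :
    19 / 50 ≤ 12201 / 25000 - 831 / 6250 * s + 684 / 15625 * s ^ 2 := by
  rcases le_total s (31 / 20) with h0 | h0
  · have h := bernstein_product_nonneg hs h0
    linarith [h 0 2, h 1 1, h 2 0]
  have h := shift_nonneg h0
  linarith [h 1, h 2]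

/-- With `level_coeff_one`, ..., `level_coeff_four`: lower bounds for the coefficients of `r ^ 0`,
..., `r ^ 4` in the difference of the two sides of `level_bound`, after division by `s ^ 2` in the
case of `r ^ 0`. -/
lemma level_coeff_zero {s : ℝ} (hs : 0 ≤ s) :
    1 / 10 ≤ 71 / 50 - 879 / 200 * s - 57413 / 20000 * s ^ 2 + 3584003 / 80000 * s ^ 3
      - 4635273419 / 36000000 * s ^ 4 + 37802753 / 187500 * s ^ 5 - 195925249 / 937500 * s ^ 6
      + 112092868 / 703125 * s ^ 7 - 24507088 / 390625 * s ^ 8 + 9086208 / 390625 * s ^ 9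
      + 21070848 / 1953125 * s ^ 10 := by
  rcases le_total s (1 / 2) with h0 | h0
  · have h := bernstein_product_nonneg hs h0
    linarith [h 0 10, h 1 9, h 2 8, h 3 7, h 4 6, h 5 5, h 6 4, h 7 3, h 8 2, h 9 1, h 10 0]
  have h := shift_nonneg h0
  linarith [h 1, h 2, h 3, h 4, h 5, h 6, h 7, h 8, h 9, h 10]

lemma level_coeff_one {s : ℝ} (hs : 0 ≤ s) :
    1 / 20 ≤ 7 / 25 - 42 / 25 * s + 15149 / 5000 * s ^ 2 + 98633 / 10000 * s ^ 3
      - 224864717 / 4000000 * s ^ 4 + 23342381 / 187500 * s ^ 5 - 292965853 / 1875000 * s ^ 6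
      + 34310401 / 234375 * s ^ 7 - 970336 / 15625 * s ^ 8 + 2271552 / 78125 * s ^ 9
      + 31606272 / 1953125 * s ^ 10 := by
  rcases le_total s (3 / 10) with h0 | h0
  · have h := bernstein_product_nonneg hs h0
    linarith [h 0 10, h 1 9, h 2 8, h 3 7, h 4 6, h 5 5, h 6 4, h 7 3, h 8 2, h 9 1, h 10 0]
  have h := shift_nonneg h0
  linarith [h 1, h 2, h 3, h 4, h 5, h 6, h 7, h 8, h 9, h 10]

lemma level_coeff_two {s : ℝ} (hs : 0 ≤ s) :
    2 / 5 ≤ 10817 / 20000 - 15167 / 80000 * s - 22331293 / 4000000 * s ^ 2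
      + 24656213 / 1000000 * s ^ 3 - 600260449 / 15000000 * s ^ 4 + 46884769 / 937500 * s ^ 5
      - 1788294 / 78125 * s ^ 6 + 1135776 / 78125 * s ^ 7 + 3950784 / 390625 * s ^ 8 := by
  rcases le_total s (1 / 4) with h0 | h0
  · have h := bernstein_product_nonneg hs h0
    linarith [h 0 8, h 1 7, h 2 6, h 3 5, h 4 4, h 5 3, h 6 2, h 7 1, h 8 0]
  have h := shift_nonneg h0
  linarith [h 1, h 2, h 3, h 4, h 5, h 6, h 7, h 8]

lemma level_coeff_three {s : ℝ} (hs : 0 ≤ s) :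
    1 / 10 ≤ 438501 / 4000000 + 1533489 / 1000000 * s - 9434449 / 2500000 * s ^ 2
      + 84607873 / 11250000 * s ^ 3 - 287687 / 78125 * s ^ 4 + 283944 / 78125 * s ^ 5
      + 1316928 / 390625 * s ^ 6 := by
  rcases le_total s (1 / 5) with h0 | h0
  · have h := bernstein_product_nonneg hs h0
    linarith [h 0 6, h 1 5, h 2 4, h 3 3, h 4 2, h 5 1, h 6 0]
  have h := shift_nonneg h0
  linarith [h 1, h 2, h 3, h 4, h 5, h 6]

lemma level_coeff_four {s : ℝ} (hs : 0 ≤ s) :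
    -17 / 250 ≤ -336933 / 5000000 + 130983 / 312500 * s - 256601 / 1250000 * s ^ 2
      + 35493 / 78125 * s ^ 3 + 246924 / 390625 * s ^ 4 := by
  rcases le_total s (3 / 20) with h0 | h0
  · have h := bernstein_product_nonneg hs h0
    linarith [h 0 4, h 1 3, h 2 2, h 3 1, h 4 0]
  have h := shift_nonneg h0
  linarith [h 1, h 2, h 3, h 4]

/-! ### Bivariate inequalities -/

lemma barrierNum_pos {s r : ℝ} (hs : 0 ≤ s) (hr : 0 ≤ r) : 0 < barrierNum s (4 * s ^ 2 + r) := by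
  have h0 : 0 < 3 - 21 / 4 * s + 2149 / 200 * s ^ 2 - 98 / 25 * s ^ 3 + 456 / 125 * s ^ 4 := by
    nlinarith [sq_nonneg (s - 1 / 4), sq_nonneg (s ^ 2 - 1 / 2 * s), sq_nonneg (s ^ 2), sq_nonneg s]
  have h1 : 0 ≤ 501 / 200 - 49 / 50 * s + 228 / 125 * s ^ 2 := by nlinarith [sq_nonneg (s - 1 / 4)]
  unfold barrierNum
  nlinarith [mul_nonneg h1 hr, sq_nonneg r]

/-- The differential inequality for the barrier: the factor after `Y - 2 s + 1` is `P ^ 2 / y ^ 2`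
times the derivative of `y ^ 3 M / P` along fixed `z`, with `y ∂_y` acting by `s ↦ s`, `Y ↦ 2 Y`. -/
lemma supersolution {s r : ℝ} (hs : 0 ≤ s) (hr : 0 ≤ r) {Y : ℝ} (hY : Y = 4 * s ^ 2 + r) :
    barrierNum s Y ^ 2 ≤ (Y - 2 * s + 1) *
      ((3 * barrierDen s Y + (-1 / 4 * s + 12 / 25 * Y)) * barrierNum s Y
        - barrierDen s Y * (-21 / 4 * s + 501 / 100 * Y + 29 / 20 * s ^ 2
          - 147 / 50 * s * Y + 114 / 125 * Y ^ 2)) := by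
  subst hY
  have h0 := mul_nonneg (sq_nonneg s) (supersolution_coeff_zero hs)
  have h1 := mul_le_mul_of_nonneg_right (supersolution_coeff_one hs) hr
  have h2 := mul_le_mul_of_nonneg_right (supersolution_coeff_two hs) (pow_nonneg hr 2)
  have h3 := mul_le_mul_of_nonneg_right (supersolution_coeff_three hs) (pow_nonneg hr 3)
  have h4 : 0 ≤ r * (7 / 100 - 13 / 50 * r + 19 / 50 * r ^ 2) :=
    mul_nonneg hr (by nlinarith [sq_nonneg (r - 13 / 38)])
  have h5 := pow_nonneg hr 4
  unfold barrierNum barrierDen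
  linarith

/-- The value of `D u ^ 2 (C u - 2 (1 - s))` at `u = M / P` is below `2 / 9`. -/
lemma level_bound {s r : ℝ} (hs : 0 ≤ s) (hr : 0 ≤ r) {Y : ℝ} (hY : Y = 4 * s ^ 2 + r)
    (hpos : 0 < Y) :
    (Y - 2 * s + 1) * barrierDen s Y ^ 2 *
      ((12 - 30 * s + 8 * Y + 16 * s ^ 2 - 6 * s * Y) * barrierDen s Y
        - 2 * (1 - s) * barrierNum s Y) < 2 / 9 * barrierNum s Y ^ 3 := by
  have h0 := mul_le_mul_of_nonneg_right (level_coeff_zero hs) (sq_nonneg s)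
  have h1 := mul_le_mul_of_nonneg_right (level_coeff_one hs) hr
  have h2 := mul_le_mul_of_nonneg_right (level_coeff_two hs) (pow_nonneg hr 2)
  have h3 := mul_le_mul_of_nonneg_right (level_coeff_three hs) (pow_nonneg hr 3)
  have h4 := mul_le_mul_of_nonneg_right (level_coeff_four hs) (pow_nonneg hr 4)
  have h5 : 0 ≤ (35493 / 1562500 * s + 123462 / 1953125 * s ^ 2) * r ^ 5 := by positivity
  have h6 : 0 ≤ 2 / 5 + 1 / 10 * r - 17 / 250 * r ^ 2 + 15543 / 6250000 * r ^ 3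
      + 20577 / 7812500 * r ^ 4 := by
    have := pow_nonneg hr 3
    nlinarith [sq_nonneg (r ^ 2 - 12), mul_nonneg hr (sq_nonneg (r - 2))]
  have h7 := mul_nonneg (pow_nonneg hr 2) h6
  -- The leading terms `s ^ 2 / 10 + r / 20` give strictness.
  have h8 : 0 < 1 / 10 * s ^ 2 + 1 / 20 * r := by nlinarith
  subst hY
  unfold barrierNum barrierDen
  linarith

/-- The bound `D u ^ 2 * 2 (s - 1) < 2 / 9` at `u = M / P`, used where `C < 0`. -/
lemma level_bound_of_one_le {s r : ℝ} (hs : 1 ≤ s) (hr : 0 ≤ r) {Y : ℝ} (hY : Y = 4 * s ^ 2 + r) :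
    9 * (s - 1) * (Y - 2 * s + 1) * barrierDen s Y ^ 2 < barrierNum s Y ^ 2 := by
  obtain ⟨q, rfl⟩ : ∃ q, s = 1 + q := ⟨s - 1, by ring⟩
  have hq : 0 ≤ q := by linarith
  subst hY
  rw [← sub_pos]
  unfold barrierNum barrierDen
  ring_nf
  positivity

/-! ### The barrier for the tortoise coordinate -/

lemma hasDerivAt_barrier (z : ℝ) {t : ℝ} (hP : barrierNum (z * t) (t ^ 2) ≠ 0) :
    HasDerivAt (fun t : ℝ => t ^ 3 * barrierDen (z * t) (t ^ 2) / barrierNum (z * t) (t ^ 2))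
      (t ^ 2 * ((3 * barrierDen (z * t) (t ^ 2) + (-1 / 4 * (z * t) + 12 / 25 * t ^ 2))
          * barrierNum (z * t) (t ^ 2)
        - barrierDen (z * t) (t ^ 2) * (-21 / 4 * (z * t) + 501 / 100 * t ^ 2
          + 29 / 20 * (z * t) ^ 2 - 147 / 50 * (z * t) * t ^ 2 + 114 / 125 * (t ^ 2) ^ 2))
        / barrierNum (z * t) (t ^ 2) ^ 2) t := by
  have hx := hasDerivAt_id' t
  have hs : HasDerivAt (fun t : ℝ => z * t) z t := by simpa using hx.const_mul z
  have hY : HasDerivAt (fun t : ℝ => t ^ 2) (2 * t) t := by simpa using hasDerivAt_pow 2 t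
  have h3 : HasDerivAt (fun t : ℝ => t ^ 3) (3 * t ^ 2) t := by simpa using hasDerivAt_pow 3 t
  have hM : HasDerivAt (fun t : ℝ => barrierDen (z * t) (t ^ 2))
      (-(1 / 4 * z) + 6 / 25 * (2 * t)) t := by
    unfold barrierDen
    exact ((hs.const_mul (1 / 4)).const_sub 1).add (hY.const_mul (6 / 25))
  have hN : HasDerivAt (fun t : ℝ => barrierNum (z * t) (t ^ 2))
      (-(21 / 4 * z) + 501 / 200 * (2 * t) + 29 / 40 * (2 * (z * t) * z)
        - 49 / 50 * (z * t ^ 2 + z * t * (2 * t)) + 57 / 250 * (2 * t ^ 2 * (2 * t))) t := by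
    unfold barrierNum
    have a := ((((hs.const_mul (21 / 4)).const_sub 3).add (hY.const_mul (501 / 200))).add
      ((hs.pow 2).const_mul (29 / 40))).sub ((hs.mul hY).const_mul (49 / 50))
    have b := a.add ((hY.pow 2).const_mul (57 / 250))
    refine (b.congr_of_eventuallyEq (Eventually.of_forall fun x => ?_)).congr_deriv ?_
    · simp only [Pi.add_apply, Pi.sub_apply, Pi.mul_apply, Pi.pow_apply]
      ring
    · push_cast
      ring
  refine ((h3.mul hM).div hN hP).congr_deriv ?_
  simp only [Pi.mul_apply]
  congr 1
  ring

lemma X_le_barrier {z : ℝ} (hz0 : 0 ≤ z) (hz1 : z ≤ 1 / 2) {y : ℝ} (hy : 0 < y) :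
    X z y ≤ y ^ 3 * (barrierDen (z * y) (y ^ 2) / barrierNum (z * y) (y ^ 2)) := by
  have hr (t : ℝ) : 0 ≤ t ^ 2 - 4 * (z * t) ^ 2 := by
    have : 0 ≤ (1 - 4 * z ^ 2) * t ^ 2 := mul_nonneg (by nlinarith) (sq_nonneg t)
    linarith
  have hP {t : ℝ} (ht : 0 ≤ t) : 0 < barrierNum (z * t) (t ^ 2) := by
    have := barrierNum_pos (mul_nonneg hz0 ht) (hr t)
    rwa [add_sub_cancel] at this
  have hD (t : ℝ) : 0 < t ^ 2 - 2 * t * z + 1 := by nlinarith [sq_nonneg (t - z)]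
  have key := intervalIntegral.integral_le_sub_of_hasDeriv_right_of_le hy.le
    (fun t ht => (hasDerivAt_barrier z (hP ht.1).ne').continuousAt.continuousWithinAt)
    (fun t ht => (hasDerivAt_barrier z (hP ht.1.le).ne').hasDerivWithinAt)
    (φ := fun t => t ^ 2 / (t ^ 2 - 2 * t * z + 1))
    ((Continuous.div (by fun_prop) (by fun_prop) fun t => (hD t).ne').continuousOn.integrableOn_Icc)
    (fun t ht => by
      have h := supersolution (mul_nonneg hz0 ht.1.le) (hr t) (add_sub_cancel _ _).symm
      rw [div_le_div_iff₀ (hD t) (pow_pos (hP ht.1.le) 2)]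
      have := mul_le_mul_of_nonneg_left h (sq_nonneg t)
      linarith)
  simpa [X, mul_div_assoc] using key

/-- The passage from `u = M / P` to all `0 ≤ u ≤ M / P`. -/
lemma level_bound_of_le {D C s u U : ℝ} (hD : 0 ≤ D) (hu : 0 ≤ u) (huU : u ≤ U)
    (h1 : D * U ^ 2 * (C * U - 2 * (1 - s)) < 2 / 9)
    (h2 : 1 ≤ s → D * U ^ 2 * (2 * (s - 1)) < 2 / 9) :
    D * u ^ 2 * (C * u - 2 * (1 - s)) < 2 / 9 := by
  have hDu : D * u ^ 2 ≤ D * U ^ 2 := by gcongr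
  have hDu0 : 0 ≤ D * u ^ 2 := by positivity
  rcases le_or_gt (C * u - 2 * (1 - s)) 0 with hneg | hpos
  · linarith [mul_nonpos_of_nonneg_of_nonpos hDu0 hneg]
  rcases le_or_gt 0 C with hC | hC
  · have : C * u ≤ C * U := by gcongr
    calc _ ≤ D * U ^ 2 * (C * U - 2 * (1 - s)) :=
          mul_le_mul hDu (by linarith) hpos.le (hDu0.trans hDu)
      _ < _ := h1
  · have hCu : C * u ≤ 0 := mul_nonpos_of_nonpos_of_nonneg hC.le hu
    calc _ ≤ D * U ^ 2 * (2 * (s - 1)) :=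
          mul_le_mul hDu (by linarith) hpos.le (hDu0.trans hDu)
      _ < _ := h2 (by linarith)

/-- Condition (iii) for the super-extremal Reissner–Nordström potential with
charge-to-mass ratio at least 2: for `0 ≤ z ≤ 1/2` and `y > 0`, `j_z(y) < 2/9`. -/
theorem stmt_19 (z : ℝ) (hz0 : 0 ≤ z) (hz1 : z ≤ 1 / 2) (y : ℝ) (hy : 0 < y) :
    j z y < 2 / 9 := by
  have hs : 0 ≤ z * y := mul_nonneg hz0 hy.le
  have hr : 0 ≤ y ^ 2 - 4 * (z * y) ^ 2 := by
    have : 0 ≤ (1 - 4 * z ^ 2) * y ^ 2 := mul_nonneg (by nlinarith) (sq_nonneg y)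
    linarith
  have hY : y ^ 2 = 4 * (z * y) ^ 2 + (y ^ 2 - 4 * (z * y) ^ 2) := (add_sub_cancel _ _).symm
  have hP : 0 < barrierNum (z * y) (y ^ 2) := by
    have := barrierNum_pos hs hr
    rwa [add_sub_cancel] at this
  have hD : 0 < y ^ 2 - 2 * (z * y) + 1 := by nlinarith [sq_nonneg (y - z)]
  have hX0 : 0 ≤ X z y := by
    refine intervalIntegral.integral_nonneg hy.le fun t _ => ?_
    have : 0 < t ^ 2 - 2 * t * z + 1 := by nlinarith [sq_nonneg (t - z)]
    positivity
  have hj : j z y = (y ^ 2 - 2 * (z * y) + 1) * (X z y / y ^ 3) ^ 2 *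
      ((12 - 30 * (z * y) + 8 * y ^ 2 + 16 * (z * y) ^ 2 - 6 * (z * y) * y ^ 2) * (X z y / y ^ 3)
        - 2 * (1 - z * y)) := by
    unfold j w
    field_simp
    ring
  have h1 := level_bound hs hr hY (pow_pos hy 2)
  have h2 := fun h : 1 ≤ z * y => level_bound_of_one_le h hr hY
  rw [hj]
  refine level_bound_of_le (U := barrierDen (z * y) (y ^ 2) / barrierNum (z * y) (y ^ 2))
    hD.le (by positivity) ?_ ?_ fun h => ?_
  · rw [div_le_iff₀ (pow_pos hy 3), mul_comm]
    exact X_le_barrier hz0 hz1 hy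
  · generalize barrierNum (z * y) (y ^ 2) = P at *
    generalize barrierDen (z * y) (y ^ 2) = M at *
    rw [← div_lt_iff₀ (pow_pos hP 3)] at h1
    refine lt_of_eq_of_lt ?_ h1
    field_simp
  · have h2 := h2 h
    generalize barrierNum (z * y) (y ^ 2) = P at *
    generalize barrierDen (z * y) (y ^ 2) = M at *
    rw [div_pow, mul_div_assoc', div_mul_eq_mul_div, div_lt_iff₀ (pow_pos hP 2)]
    linarith
end
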